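/- Let P and Q be finite sets of points in the plane (possibly containing collinear triples), each of cardinality n with n ≤ 5, each not contained in a line, such that P and Q have the same number of convex hull points. Then there exist a triangulation T_P of P and a triangulation T_Q of Q that are compatible. -/

import Mathlib

open Set

/-- Points of the plane. -/
abbrev Pt : Type := ℝ × ℝ

noncomputable section

/-- The determinant of two plane vectors. -/
def det2 (u v : Pt) : ℝ := u.1 * v.2 - u.2 * v.1

/-- A triple `(a,b,c)` of points is clockwise-ordered if `det (b-a, c-a) < 0`. -/
def Clockwise (a b c : Pt) : Prop := det2 (b - a) (c - a) < 0

/-- The closed segments `[a,b]` and `[c,d]` cross: they intersect in a point that is not a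
common endpoint of the two segments. -/
def Crosses (a b c d : Pt) : Prop :=
  ∃ x : Pt, x ∈ segment ℝ a b ∧ x ∈ segment ℝ c d ∧
    ¬((x = a ∨ x = b) ∧ (x = c ∨ x = d))

/-- `T` is a set of unordered pairs of distinct points of `P` whose corresponding
segments are pairwise non-crossing. -/
def ValidSegs (P : Finset Pt) (T : Set (Sym2 Pt)) : Prop :=
  (∀ e ∈ T, ∃ a b : Pt, a ∈ P ∧ b ∈ P ∧ a ≠ b ∧ e = s(a, b)) ∧
  (∀ a b c d : Pt, s(a, b) ∈ T → s(c, d) ∈ T → s(a, b) ≠ s(c, d) → ¬ Crosses a b c d)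

/-- A triangulation of `P`: a maximal (w.r.t. inclusion) set of unordered pairs of distinct
points of `P`, no two of whose segments cross. -/
def IsTriangulation (P : Finset Pt) (T : Set (Sym2 Pt)) : Prop :=
  ValidSegs P T ∧ ∀ T' : Set (Sym2 Pt), ValidSegs P T' → T ⊆ T' → T' = T

/-- A convex hull point of `P`: a point of `P` on the boundary of `conv P`. -/
def HullPoint (P : Finset Pt) (p : Pt) : Prop :=
  p ∈ P ∧ p ∈ frontier (convexHull ℝ (P : Set Pt))

/-- An internal point of `P`: a point of `P` in the interior of `conv P`. -/
def InternalPoint (P : Finset Pt) (p : Pt) : Prop :=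
  p ∈ P ∧ p ∈ interior (convexHull ℝ (P : Set Pt))

/-- The number of convex hull points of `P`. -/
def hullCount (P : Finset Pt) : ℕ := {p : Pt | HullPoint P p}.ncard

/-- The number of internal points of `P`. -/
def internalCount (P : Finset Pt) : ℕ := {p : Pt | InternalPoint P p}.ncard

/-- The open triangle with vertices `a`, `b`, `c`. -/
def openTriangle (a b c : Pt) : Set Pt := interior (convexHull ℝ ({a, b, c} : Set Pt))

/-- `(a,b,c)` is a triangle of the triangulation `T` of `P`: the three points are distinct
points of `P`, the three pairs are in `T`, and the open triangle `abc` contains no point of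
`P` and meets no segment of `T`. -/
def IsTriangleOf (P : Finset Pt) (T : Set (Sym2 Pt)) (a b c : Pt) : Prop :=
  a ∈ P ∧ b ∈ P ∧ c ∈ P ∧ a ≠ b ∧ b ≠ c ∧ a ≠ c ∧
  s(a, b) ∈ T ∧ s(b, c) ∈ T ∧ s(a, c) ∈ T ∧
  (∀ p ∈ P, p ∉ openTriangle a b c) ∧
  (∀ u v : Pt, s(u, v) ∈ T → ∀ x ∈ segment ℝ u v, x ∉ openTriangle a b c)

/-- Triangulations `TP` of `P` and `TQ` of `Q` are compatible via the bijection `φ : P → Q`: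
`(a,b,c)` is a clockwise-ordered triangle of `TP` iff `(φ a, φ b, φ c)` is a
clockwise-ordered triangle of `TQ`. -/
def CompatibleVia (P Q : Finset Pt) (TP TQ : Set (Sym2 Pt)) (φ : Pt → Pt) : Prop :=
  Set.BijOn φ (P : Set Pt) (Q : Set Pt) ∧
  ∀ a b c : Pt, a ∈ P → b ∈ P → c ∈ P →
    ((IsTriangleOf P TP a b c ∧ Clockwise a b c) ↔
     (IsTriangleOf Q TQ (φ a) (φ b) (φ c) ∧ Clockwise (φ a) (φ b) (φ c)))

/-- Triangulations `TP` of `P` and `TQ` of `Q` are compatible. -/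
def Compatible (P Q : Finset Pt) (TP TQ : Set (Sym2 Pt)) : Prop :=
  ∃ φ : Pt → Pt, CompatibleVia P Q TP TQ φ

/-- The degree of a point `p` in a triangulation `T`: the number of pairs of `T`
containing `p`. -/
def degreeIn (T : Set (Sym2 Pt)) (p : Pt) : ℕ := {e ∈ T | p ∈ e}.ncard

/-- `P` is in general position: no three points of `P` are collinear. -/
def GenPos (P : Finset Pt) : Prop :=
  ∀ a b c : Pt, a ∈ P → b ∈ P → c ∈ P → a ≠ b → b ≠ c → a ≠ c →
    ¬ Collinear ℝ ({a, b, c} : Set Pt)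

end

/-!
A triangle `abc` of maximal area spanned by `P` confines every other point of `P`: it lies inside
`abc` or beyond exactly one of its edges, for otherwise some triangle would be larger. Locating
the at most two remaining points in this way, and comparing their positions by three-term
Plücker relations, shows that `P` carries one of six labelled triangulations: a triangle, a fan
or a wheel on four points, and a fan, a wheel or a stacked triangle on five. Among these the
numbers of points and of convex hull points determine the combinatorial type.

That a labelled placement is a triangulation with the prescribed triangles and hull points follows
from the orientation signs of a few triples of labels, some of which may degenerate to zero. This
reduces the verification of each type to a finite check that does not involve coordinates.
-/

/-! ### Orientation of triples -/

/-- Twice the signed area of the triangle `abc`; it is negative exactly for clockwise triples. -/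
def orient (a b c : Pt) : ℝ := det2 (b - a) (c - a)

section Orientation

variable {a b c d : Pt}

lemma orient_eq (a b c : Pt) :
    orient a b c = (b.1 - a.1) * (c.2 - a.2) - (b.2 - a.2) * (c.1 - a.1) := rfl

lemma orient_rotate_left (a b c : Pt) : orient b c a = orient a b c := by
  simp only [orient_eq]; ring

lemma orient_rotate_right (a b c : Pt) : orient c a b = orient a b c := by
  simp only [orient_eq]; ring

lemma orient_swap_left (a b c : Pt) : orient b a c = -orient a b c := by
  simp only [orient_eq]; ring

lemma orient_swap_right (a b c : Pt) : orient a c b = -orient a b c := by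
  simp only [orient_eq]; ring

lemma orient_self_left (a b : Pt) : orient a a b = 0 := by
  simp only [orient_eq]; ring

lemma orient_self_right (a b : Pt) : orient a b b = 0 := by
  simp only [orient_eq]; ring

lemma orient_self_outer (a b : Pt) : orient a b a = 0 := by
  simp only [orient_eq]; ring

lemma orient_add_orient_add_orient (a b c x : Pt) :
    orient a b x + orient b c x + orient c a x = orient a b c := by
  simp only [orient_eq]; ring

lemma orient_smul_add_smul {s t : ℝ} (hst : s + t = 1) (a b x y : Pt) :
    orient a b (s • x + t • y) = s * orient a b x + t * orient a b y := by
  obtain rfl : t = 1 - s := eq_sub_of_add_eq' hst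
  simp only [orient_eq, Prod.fst_add, Prod.snd_add, Prod.smul_fst, Prod.smul_snd, smul_eq_mul]
  ring

lemma eq_of_orient_eq_zero (habc : orient a b c ≠ 0) (habd : orient a b d = 0)
    (hbcd : orient b c d = 0) : d = b := by
  have hfst : orient a b c * (d.1 - b.1) =
      (c.1 - b.1) * orient a b d - (b.1 - a.1) * orient b c d := by simp only [orient_eq]; ring
  have hsnd : orient a b c * (d.2 - b.2) =
      (c.2 - b.2) * orient a b d - (b.2 - a.2) * orient b c d := by simp only [orient_eq]; ring
  rw [habd, hbcd, mul_zero, mul_zero, sub_zero] at hfst hsnd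
  exact Prod.ext (sub_eq_zero.1 ((mul_eq_zero.1 hfst).resolve_left habc))
    (sub_eq_zero.1 ((mul_eq_zero.1 hsnd).resolve_left habc))

end Orientation

/-! ### Half-planes, segments and open triangles -/

/-- The functional `det2 g`; every linear functional on the plane has this form, so half-planes
can be described by orientations. -/
def det2Linear (g : Pt) : Pt →ₗ[ℝ] ℝ := g.1 • LinearMap.snd ℝ ℝ ℝ - g.2 • LinearMap.fst ℝ ℝ ℝ

section Halfplane

variable {a b c d u v w x : Pt}

lemma det2Linear_apply (g x : Pt) : det2Linear g x = det2 g x := rfl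

lemma det2Linear_ne_zero {g : Pt} (hg : g ≠ 0) : det2Linear g ≠ 0 := by
  intro h
  refine hg (Prod.ext ?_ ?_)
  · simpa [det2Linear] using LinearMap.congr_fun h (0, 1)
  · simpa [det2Linear] using LinearMap.congr_fun h (1, 0)

lemma exists_det2Linear_eq (f : Pt →ₗ[ℝ] ℝ) : ∃ g, det2Linear g = f := by
  refine ⟨(f (0, 1), -f (1, 0)), LinearMap.prod_ext ?_ ?_⟩ <;> ext <;> simp [det2Linear]

lemma setOf_orient_nonpos (a b : Pt) :
    {x | orient a b x ≤ 0} = det2Linear (b - a) ⁻¹' Iic (det2Linear (b - a) a) := by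
  ext x
  rw [mem_preimage, mem_Iic, ← sub_nonpos, ← map_sub, det2Linear_apply]
  rfl

lemma convex_setOf_orient_nonpos (a b : Pt) : Convex ℝ {x | orient a b x ≤ 0} := by
  rw [setOf_orient_nonpos]
  exact (convex_Iic _).linear_preimage _

lemma orient_neg_of_mem_interior (hab : a ≠ b) (hx : x ∈ interior {x | orient a b x ≤ 0}) :
    orient a b x < 0 := by
  have hopen : IsOpenMap (det2Linear (b - a)) :=
    (det2Linear (b - a)).isOpenMap_of_finiteDimensional
      (LinearMap.surjective (det2Linear_ne_zero (sub_ne_zero.2 hab.symm)))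
  rw [setOf_orient_nonpos, ← hopen.preimage_interior_eq_interior_preimage
    (LinearMap.continuous_of_finiteDimensional _), interior_Iic, mem_preimage, mem_Iio,
    ← sub_neg, ← map_sub] at hx
  exact hx

lemma orient_nonpos_of_mem_segment (hx : x ∈ segment ℝ a b) (ha : orient u w a ≤ 0)
    (hb : orient u w b ≤ 0) : orient u w x ≤ 0 :=
  (convex_setOf_orient_nonpos u w).segment_subset ha hb hx

lemma eq_right_of_mem_segment (hx : x ∈ segment ℝ a b) (ha : orient u w a < 0)
    (hb : orient u w b ≤ 0) (hux : orient u w x = 0) : x = b := by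
  obtain ⟨s, t, hs, ht, hst, rfl⟩ := hx
  rw [orient_smul_add_smul hst] at hux
  obtain rfl : s = 0 := by nlinarith
  obtain rfl : t = 1 := by linarith
  simp

lemma eq_endpoint_of_mem_segment (hx : x ∈ segment ℝ a b) (ha : orient u w a ≤ 0)
    (hb : orient u w b ≤ 0) (hab : orient u w a < 0 ∨ orient u w b < 0)
    (hux : orient u w x = 0) : x = a ∨ x = b := by
  rcases hab with ha' | hb'
  · exact .inr (eq_right_of_mem_segment hx ha' hb hux)
  · exact .inl (eq_right_of_mem_segment (segment_symm ℝ a b ▸ hx) hb' ha hux)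

lemma openTriangle_subset (huw : u ≠ w) (ha : orient u w a ≤ 0) (hb : orient u w b ≤ 0)
    (hc : orient u w c ≤ 0) : openTriangle a b c ⊆ {x | orient u w x < 0} := by
  refine fun x hx => orient_neg_of_mem_interior huw
    (interior_mono (convexHull_min ?_ (convex_setOf_orient_nonpos u w)) hx)
  rintro y (rfl | rfl | rfl) <;> assumption

lemma disjoint_segment_openTriangle (huw : u ≠ w) (ha : orient u w a ≤ 0)
    (hb : orient u w b ≤ 0) (hc : orient u w c ≤ 0) (hv : orient w u v ≤ 0)
    (hd : orient w u d ≤ 0) : Disjoint (segment ℝ v d) (openTriangle a b c) := by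
  refine Set.disjoint_left.2 fun x hseg htri => ?_
  have hneg : orient u w x < 0 := openTriangle_subset huw ha hb hc htri
  have hpos := orient_nonpos_of_mem_segment hseg hv hd
  rw [orient_swap_left] at hpos
  linarith

lemma mem_convexHull_triangle (habc : orient a b c < 0) (habx : orient a b x ≤ 0)
    (hbcx : orient b c x ≤ 0) (hcax : orient c a x ≤ 0) : x ∈ convexHull ℝ {a, b, c} := by
  refine mem_convexHull_of_exists_fintype
    ![orient b c x / orient a b c, orient c a x / orient a b c, orient a b x / orient a b c]
    ![a, b, c] ?_ ?_ ?_ ?_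
  · intro i
    fin_cases i
    exacts [div_nonneg_of_nonpos hbcx habc.le, div_nonneg_of_nonpos hcax habc.le,
      div_nonneg_of_nonpos habx habc.le]
  · simp only [Fin.sum_univ_three, Matrix.cons_val]
    rw [← add_div, ← add_div, div_eq_one_iff_eq habc.ne, ← orient_add_orient_add_orient a b c x]
    ring
  · intro i
    fin_cases i <;> simp
  · have hne := habc.ne
    ext <;> simp only [Fin.sum_univ_three, Matrix.cons_val, Prod.fst_add, Prod.snd_add,
      Prod.smul_fst, Prod.smul_snd, smul_eq_mul] <;> field_simp <;> simp only [orient_eq] <;> ring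

lemma continuous_orient (a b : Pt) : Continuous (orient a b) := by
  simp only [funext (orient_eq a b)]
  fun_prop

lemma mem_openTriangle (habx : orient a b x < 0) (hbcx : orient b c x < 0)
    (hcax : orient c a x < 0) : x ∈ openTriangle a b c := by
  have hopen : IsOpen {x | orient a b x < 0 ∧ orient b c x < 0 ∧ orient c a x < 0} :=
    (isOpen_lt (continuous_orient a b) continuous_const).inter
      ((isOpen_lt (continuous_orient b c) continuous_const).inter
        (isOpen_lt (continuous_orient c a) continuous_const))
  refine interior_maximal ?_ hopen ⟨habx, hbcx, hcax⟩
  rintro y ⟨haby, hbcy, hcay⟩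
  have habc : orient a b c < 0 := by linarith [orient_add_orient_add_orient a b c y]
  exact mem_convexHull_triangle habc haby.le hbcy.le hcay.le

end Halfplane

/-! ### Crossing segments -/

section Crosses

variable {a b c d u v w x y : Pt}

lemma not_crosses_of_strict (ha : orient u w a < 0) (hb : orient u w b < 0)
    (hc : orient w u c ≤ 0) (hd : orient w u d ≤ 0) : ¬ Crosses a b c d := by
  rintro ⟨x, hab, hcd, -⟩
  have hle := orient_nonpos_of_mem_segment hab ha.le hb.le
  have hge := orient_nonpos_of_mem_segment hcd hc hd
  rw [orient_swap_left] at hge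
  have hxb := eq_right_of_mem_segment hab ha hb.le (by linarith)
  rw [hxb] at hge
  linarith

lemma not_crosses_of_weak (ha : orient u w a ≤ 0) (hb : orient u w b ≤ 0)
    (hab : orient u w a < 0 ∨ orient u w b < 0) (hc : orient w u c ≤ 0) (hd : orient w u d ≤ 0)
    (hcd : orient w u c < 0 ∨ orient w u d < 0) : ¬ Crosses a b c d := by
  rintro ⟨x, hxab, hxcd, hx⟩
  have hle := orient_nonpos_of_mem_segment hxab ha hb
  have hge := orient_nonpos_of_mem_segment hxcd hc hd
  have hzero : orient u w x = 0 := by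
    rw [orient_swap_left] at hge
    linarith
  have hzero' : orient w u x = 0 := by rw [orient_swap_left, hzero, neg_zero]
  exact hx ⟨eq_endpoint_of_mem_segment hxab ha hb hab hzero,
    eq_endpoint_of_mem_segment hxcd hc hd hcd hzero'⟩

lemma not_crosses_of_common_endpoint (h : orient v x y < 0) : ¬ Crosses v x v y := by
  rintro ⟨z, hx, hy, hz⟩
  have hle : orient v x z ≤ 0 := orient_nonpos_of_mem_segment hy (orient_self_outer v x).le h.le
  have hge : orient x v z ≤ 0 :=
    orient_nonpos_of_mem_segment hx (orient_self_right x v).le (orient_self_outer x v).le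
  rw [orient_swap_left] at hge
  obtain rfl : z = v := eq_right_of_mem_segment (segment_symm ℝ v y ▸ hy) h
    (orient_self_outer v x).le (by linarith)
  exact hz ⟨.inl rfl, .inl rfl⟩

lemma Crosses.symm (h : Crosses a b c d) : Crosses c d a b := by
  obtain ⟨x, hab, hcd, hx⟩ := h
  exact ⟨x, hcd, hab, fun hx' => hx hx'.symm⟩

lemma Crosses.swap_left (h : Crosses a b c d) : Crosses b a c d := by
  obtain ⟨x, hab, hcd, hx⟩ := h
  exact ⟨x, segment_symm ℝ a b ▸ hab, hcd, fun hx' => hx (hx'.imp_left Or.symm)⟩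

lemma Crosses.swap_right (h : Crosses a b c d) : Crosses a b d c :=
  h.symm.swap_left.symm

lemma crosses_of_orient (hbac : orient b a c < 0) (habd : orient a b d < 0)
    (hcda : orient c d a ≤ 0) (hdcb : orient d c b ≤ 0) : Crosses a b c d := by
  rw [orient_swap_left] at hbac hdcb
  set D := orient a b c - orient a b d with hD
  have hD' : D = orient c d b - orient c d a := by simp only [hD, orient_eq]; ring
  have hDpos : 0 < D := by linarith
  have hcd : -orient a b d / D + orient a b c / D = 1 := by
    rw [← add_div, div_eq_one_iff_eq hDpos.ne']; linarith
  have hab : orient c d b / D + -orient c d a / D = 1 := by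
    rw [← add_div, div_eq_one_iff_eq hDpos.ne']; linarith
  have hmeet : (-orient a b d / D) • c + (orient a b c / D) • d
      = (orient c d b / D) • a + (-orient c d a / D) • b := by
    simp only [div_eq_inv_mul, mul_smul, ← smul_add]
    congr 1
    ext <;> simp only [orient_eq, Prod.fst_add, Prod.snd_add, Prod.smul_fst, Prod.smul_snd,
      smul_eq_mul] <;> ring
  have hmem : (-orient a b d / D) • c + (orient a b c / D) • d ∈ segment ℝ c d :=
    ⟨_, _, div_nonneg (by linarith) hDpos.le, div_nonneg (by linarith) hDpos.le, hcd, rfl⟩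
  have honline : orient a b ((-orient a b d / D) • c + (orient a b c / D) • d) = 0 := by
    rw [orient_smul_add_smul hcd]; ring
  refine ⟨_, hmeet ▸ ⟨_, _, div_nonneg (by linarith) hDpos.le,
    div_nonneg (by linarith) hDpos.le, hab, rfl⟩, hmem, ?_⟩
  rintro ⟨-, heq | heq⟩ <;> rw [heq] at honline <;> linarith

end Crosses

/-! ### Convex hull points -/

section Hull

variable {a b c u v : Pt} {P : Finset Pt}

lemma exists_eq_smul_of_det2_eq_zero (hu : u ≠ 0) (h : det2 u v = 0) : ∃ r : ℝ, v = r • u := by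
  rw [det2, sub_eq_zero] at h
  by_cases hfst : u.1 = 0
  · have hsnd : u.2 ≠ 0 := fun hsnd => hu (Prod.ext hfst hsnd)
    rw [hfst, zero_mul, eq_comm, mul_eq_zero, or_iff_right hsnd] at h
    exact ⟨v.2 / u.2, Prod.ext (by simp [h, hfst]) (div_mul_cancel₀ _ hsnd).symm⟩
  · refine ⟨v.1 / u.1, Prod.ext (div_mul_cancel₀ _ hfst).symm ?_⟩
    rw [Prod.smul_snd, smul_eq_mul, div_mul_eq_mul_div, mul_comm, ← h, mul_div_cancel_left₀ _ hfst]

lemma exists_ne_of_not_collinear (hP : ¬ Collinear ℝ (P : Set Pt)) (v : Pt) : ∃ u ∈ P, u ≠ v := by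
  by_contra! h
  exact hP ((collinear_singleton ℝ v).subset h)

lemma exists_orient_ne_zero (hP : ¬ Collinear ℝ (P : Set Pt)) (ha : a ∈ P) (hab : a ≠ b) :
    ∃ c ∈ P, orient a b c ≠ 0 := by
  by_contra! hzero
  refine hP ((collinear_iff_of_mem ha).2 ⟨b - a, fun c hc => ?_⟩)
  obtain ⟨r, hr⟩ := exists_eq_smul_of_det2_eq_zero (sub_ne_zero.2 hab.symm) (hzero c hc)
  exact ⟨r, by rw [vadd_eq_add, ← hr, sub_add_cancel]⟩

lemma exists_orient_neg (hP : ¬ Collinear ℝ (P : Set Pt)) :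
    ∃ a ∈ P, ∃ b ∈ P, ∃ c ∈ P, orient a b c < 0 := by
  obtain ⟨a, ha, -⟩ := exists_ne_of_not_collinear hP 0
  obtain ⟨b, hb, hba⟩ := exists_ne_of_not_collinear hP a
  obtain ⟨c, hc, habc⟩ := exists_orient_ne_zero hP ha hba.symm
  rcases lt_or_gt_of_ne habc with h | h
  · exact ⟨a, ha, b, hb, c, hc, h⟩
  · exact ⟨b, hb, a, ha, c, hc, by rwa [orient_swap_left, neg_lt_zero]⟩

lemma openTriangle_nonempty (habc : orient a b c < 0) : (openTriangle a b c).Nonempty := by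
  refine ⟨((a.1 + b.1 + c.1) / 3, (a.2 + b.2 + c.2) / 3), mem_openTriangle ?_ ?_ ?_⟩ <;>
  · rw [orient_eq] at habc ⊢
    linarith

lemma nonempty_interior_convexHull (hP : ¬ Collinear ℝ (P : Set Pt)) :
    (interior (convexHull ℝ (P : Set Pt))).Nonempty := by
  obtain ⟨a, ha, b, hb, c, hc, habc⟩ := exists_orient_neg hP
  refine (openTriangle_nonempty habc).mono (interior_mono (convexHull_mono ?_))
  rintro x (rfl | rfl | rfl) <;> assumption

lemma exists_supporting_direction (hP : ¬ Collinear ℝ (P : Set Pt)) (hv : HullPoint P v) :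
    ∃ g ≠ 0, ∀ k ∈ P, det2 g (k - v) ≤ 0 := by
  have hconv := convex_convexHull ℝ (P : Set Pt)
  have hne := nonempty_interior_convexHull hP
  obtain ⟨f, hf⟩ := geometric_hahn_banach_open_point hconv.interior isOpen_interior hv.2.2
  have hle : ∀ k ∈ P, f k ≤ f v := by
    intro k hk
    have hclosure : k ∈ closure (interior (convexHull ℝ (P : Set Pt))) := by
      rw [hconv.closure_interior_eq_closure_of_nonempty_interior hne]
      exact subset_closure (subset_convexHull ℝ _ hk)
    exact closure_minimal (fun a ha => (hf a ha).le)
      (isClosed_le f.continuous continuous_const) hclosure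
  obtain ⟨g, hg⟩ := exists_det2Linear_eq (f : Pt →ₗ[ℝ] ℝ)
  have hg' : ∀ x, f x = det2 g x := fun x => (LinearMap.congr_fun hg x).symm
  refine ⟨g, ?_, fun k hk => ?_⟩
  · rintro rfl
    obtain ⟨z, hz⟩ := hne
    simpa [hg', det2] using hf z hz
  · rw [← hg', map_sub, sub_nonpos]
    exact hle k hk

/-- The standard inner product of the plane, as `ℝ × ℝ` carries none in Mathlib. -/
def dot (u v : Pt) : ℝ := u.1 * v.1 + u.2 * v.2

lemma dot_mul_det2_sub_det2_mul_dot (g x y : Pt) :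
    dot g x * det2 g y - det2 g x * dot g y = dot g g * det2 x y := by
  simp only [dot, det2]; ring

lemma dot_self_pos {g : Pt} (hg : g ≠ 0) : 0 < dot g g := by
  have hne : g.1 ≠ 0 ∨ g.2 ≠ 0 := by
    by_contra! h
    exact hg (Prod.ext h.1 h.2)
  rcases hne with h | h
  · exact add_pos_of_pos_of_nonneg (mul_self_pos.2 h) (mul_self_nonneg _)
  · exact add_pos_of_nonneg_of_pos (mul_self_nonneg _) (mul_self_pos.2 h)

-- Among vectors in a closed half-plane, one of extreme angle has all others on one side;
-- the angle is compared through its cotangent relative to `g`.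
lemma exists_extreme_direction {g : Pt} (hg : g ≠ 0) {S : Finset Pt} (hS : ∃ u ∈ S, u ≠ 0)
    (hside : ∀ x ∈ S, det2 g x ≤ 0) : ∃ u ∈ S, u ≠ 0 ∧ ∀ x ∈ S, 0 ≤ det2 u x := by
  have key : ∀ {u x}, 0 ≤ dot g u * det2 g x - det2 g u * dot g x → 0 ≤ det2 u x := by
    intro u x h
    rw [dot_mul_det2_sub_det2_mul_dot] at h
    exact nonneg_of_mul_nonneg_right h (dot_self_pos hg)
  by_cases hback : ∃ u ∈ S, det2 g u = 0 ∧ dot g u < 0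
  · obtain ⟨u, hu, hdet, hdot⟩ := hback
    refine ⟨u, hu, ?_, fun x hx => key ?_⟩
    · rintro rfl
      simp [dot] at hdot
    · rw [hdet, zero_mul, sub_zero]
      exact mul_nonneg_of_nonpos_of_nonpos hdot.le (hside x hx)
  push Not at hback
  by_cases hflat : ∀ x ∈ S, det2 g x = 0
  · obtain ⟨u, hu, hu0⟩ := hS
    exact ⟨u, hu, hu0, fun x hx => key (by rw [hflat x hx, hflat u hu]; simp)⟩
  push Not at hflat
  obtain ⟨u, hu, hmin⟩ := (S.filter (det2 g · < 0)).exists_min_image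
    (fun x => dot g x / -det2 g x) (by
      obtain ⟨x, hx, hne⟩ := hflat
      exact ⟨x, Finset.mem_filter.2 ⟨hx, (hside x hx).lt_of_ne hne⟩⟩)
  obtain ⟨hu, hdet⟩ := Finset.mem_filter.1 hu
  refine ⟨u, hu, ?_, fun x hx => key ?_⟩
  · rintro rfl
    simp [det2] at hdet
  · rcases (hside x hx).lt_or_eq with hx' | hx'
    · have := hmin x (Finset.mem_filter.2 ⟨hx, hx'⟩)
      rw [div_le_div_iff₀ (by linarith) (by linarith)] at this
      linarith
    · rw [hx', mul_zero, zero_sub, neg_nonneg]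
      exact mul_nonpos_of_nonpos_of_nonneg hdet.le (hback x hx hx')

lemma hullPoint_of_orient_nonpos (hu : u ≠ v) (hv : v ∈ P) (hside : ∀ k ∈ P, orient u v k ≤ 0) :
    HullPoint P v := by
  refine ⟨hv, subset_closure (subset_convexHull ℝ _ hv), fun hint => ?_⟩
  have := orient_neg_of_mem_interior hu
    (interior_mono (convexHull_min hside (convex_setOf_orient_nonpos u v)) hint)
  exact this.ne (orient_self_right u v)

lemma hullPoint_iff (hP : ¬ Collinear ℝ (P : Set Pt)) (hv : v ∈ P) :
    HullPoint P v ↔ ∃ u ∈ P, u ≠ v ∧ ∀ k ∈ P, orient u v k ≤ 0 := by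
  refine ⟨fun h => ?_, fun ⟨u, _, huv, hside⟩ => hullPoint_of_orient_nonpos huv hv hside⟩
  obtain ⟨g, hg, hside⟩ := exists_supporting_direction hP h
  obtain ⟨w, hw, hwv⟩ := exists_ne_of_not_collinear hP v
  obtain ⟨u, hu, hu0, hextreme⟩ := exists_extreme_direction hg (S := P.image (· - v))
    ⟨w - v, Finset.mem_image_of_mem _ hw, sub_ne_zero.2 hwv⟩
    (by simpa only [Finset.forall_mem_image] using hside)
  obtain ⟨u, huP, rfl⟩ := Finset.mem_image.1 hu
  refine ⟨u, huP, sub_ne_zero.1 hu0, fun k hk => ?_⟩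
  rw [orient_swap_left, neg_nonpos]
  exact hextreme _ (Finset.mem_image_of_mem _ hk)

end Hull

/-! ### Certified sign patterns -/

/-- A combinatorial type of triangulations of `n` labelled points: the edges, the clockwise
faces (each listed in one of its three rotations) and the convex hull points. -/
structure TriangulationType (n : ℕ) where
  edges : Finset (Sym2 (Fin n))
  faces : List (Fin n × Fin n × Fin n)
  hull : Finset (Fin n)

/-- The triple `(i, j, k)` occurs in `L` up to rotation. -/
def CyclicMem {n : ℕ} (L : List (Fin n × Fin n × Fin n)) (i j k : Fin n) : Prop :=
  (i, j, k) ∈ L ∨ (j, k, i) ∈ L ∨ (k, i, j) ∈ L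
deriving Decidable

namespace TriangulationType

variable {n : ℕ} {𝒯 : TriangulationType n} {p : Fin n → Pt} {P Q : Finset Pt}

/-- The segments spanned by the edges of `𝒯` when its vertices are placed at the points `p`. -/
def segments (𝒯 : TriangulationType n) (p : Fin n → Pt) : Set (Sym2 Pt) :=
  Sym2.map p '' 𝒯.edges

/-- Placed at the points `p`, the combinatorial type `𝒯` becomes a triangulation of `P` whose
clockwise triangles are the faces of `𝒯`. -/
structure Realizes (𝒯 : TriangulationType n) (P : Finset Pt) (p : Fin n → Pt) : Prop where
  injective : p.Injective
  range_eq : range p = P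
  isTriangulation : IsTriangulation P (𝒯.segments p)
  isTriangleOf_iff : ∀ i j k, IsTriangleOf P (𝒯.segments p) (p i) (p j) (p k) ∧
    Clockwise (p i) (p j) (p k) ↔ CyclicMem 𝒯.faces i j k

lemma Realizes.compatible {q : Fin n → Pt} (hp : 𝒯.Realizes P p) (hq : 𝒯.Realizes Q q) :
    Compatible P Q (𝒯.segments p) (𝒯.segments q) := by
  have hextend : ∀ i, Function.extend p q id (p i) = q i := hp.injective.extend_apply q id
  refine ⟨Function.extend p q id, ?_, fun a b c ha hb hc => ?_⟩
  · rw [← hp.range_eq, ← hq.range_eq]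
    refine ⟨?_, ?_, ?_⟩
    · rintro _ ⟨i, rfl⟩
      exact ⟨i, (hextend i).symm⟩
    · rintro _ ⟨i, rfl⟩ _ ⟨j, rfl⟩ hij
      rw [hextend, hextend] at hij
      rw [hq.injective hij]
    · rintro _ ⟨i, rfl⟩
      exact ⟨p i, mem_range_self i, hextend i⟩
  · rw [← Finset.mem_coe, ← hp.range_eq] at ha hb hc
    obtain ⟨⟨i, rfl⟩, ⟨j, rfl⟩, ⟨k, rfl⟩⟩ := ha, hb, hc
    rw [hextend, hextend, hextend, hp.isTriangleOf_iff, hq.isTriangleOf_iff]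

end TriangulationType

/-- A combinatorial type together with triples of labels required to be clockwise (`strict`) or
to be clockwise or collinear (`weak`). -/
structure SignPattern (n : ℕ) extends TriangulationType n where
  strict : List (Fin n × Fin n × Fin n)
  weak : List (Fin n × Fin n × Fin n)

namespace SignPattern

variable {n : ℕ} {S : SignPattern n} {p : Fin n → Pt} {P : Finset Pt} {i j k l : Fin n}

/-- `S` forces the triple `(i, j, k)` to be clockwise. -/
def Neg (S : SignPattern n) (i j k : Fin n) : Prop := CyclicMem S.strict i j k
deriving Decidable

/-- `S` forces the triple `(i, j, k)` to be clockwise or collinear. -/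
def Nonpos (S : SignPattern n) (i j k : Fin n) : Prop :=
  i = j ∨ j = k ∨ k = i ∨ S.Neg i j k ∨ CyclicMem S.weak i j k
deriving Decidable

/-- The map `p` enumerates the points of `P` in accordance with the signs prescribed by `S`. -/
structure Placement (S : SignPattern n) (P : Finset Pt) (p : Fin n → Pt) : Prop where
  card_eq : P.card = n
  mem : ∀ i, p i ∈ P
  strict_neg : ∀ t ∈ S.strict, orient (p t.1) (p t.2.1) (p t.2.2) < 0
  weak_nonpos : ∀ t ∈ S.weak, orient (p t.1) (p t.2.1) (p t.2.2) ≤ 0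

/-- The signs prescribed by `S` imply, by a common endpoint or a separating line, that the
segments `ij` and `kl` do not cross. -/
def Avoids (S : SignPattern n) (i j k l : Fin n) : Prop :=
  (i = k ∧ S.Neg i j l ∨ i = l ∧ S.Neg i j k ∨ j = k ∧ S.Neg j i l ∨ j = l ∧ S.Neg j i k) ∨
  (∃ u w, S.Neg u w i ∧ S.Neg u w j ∧ S.Nonpos w u k ∧ S.Nonpos w u l) ∨
  ∃ u w, S.Nonpos u w i ∧ S.Nonpos u w j ∧ (S.Neg u w i ∨ S.Neg u w j) ∧
    S.Nonpos w u k ∧ S.Nonpos w u l ∧ (S.Neg w u k ∨ S.Neg w u l)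
deriving Decidable

/-- The signs prescribed by `S` imply that the segments `ij` and `kl` cross. -/
def ForcesCrossing (S : SignPattern n) (i j k l : Fin n) : Prop :=
  S.Neg j i k ∧ S.Neg i j l ∧ S.Nonpos k l i ∧ S.Nonpos l k j
deriving Decidable

/-- The signs prescribed by `S` imply that the segment `xy` misses the open triangle `ijk`. -/
def Misses (S : SignPattern n) (x y i j k : Fin n) : Prop :=
  ∃ u w, u ≠ w ∧ S.Nonpos u w i ∧ S.Nonpos u w j ∧ S.Nonpos u w k ∧
    S.Nonpos w u x ∧ S.Nonpos w u y
deriving Decidable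

/-- The signs prescribed by `S` suffice to verify that every placement realizes the combinatorial
type of `S`. All conditions are decidable for concrete `S`. -/
structure IsCertified (S : SignPattern n) : Prop where
  distinct : ∀ i j, i ≠ j → ∃ k l, S.Neg i k l ∧ S.Nonpos j l k
  loopless : ∀ i, s(i, i) ∉ S.edges
  noncrossing : ∀ i j k l, s(i, j) ∈ S.edges → s(k, l) ∈ S.edges → s(i, j) ≠ s(k, l) →
    S.Avoids i j k l ∨ S.Avoids k l i j
  maximal : ∀ i j, i ≠ j → s(i, j) ∈ S.edges ∨
    ∃ k l, s(k, l) ∈ S.edges ∧ S.ForcesCrossing k l i j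
  face : ∀ i j k, CyclicMem S.faces i j k →
    s(i, j) ∈ S.edges ∧ s(j, k) ∈ S.edges ∧ s(i, k) ∈ S.edges ∧ S.Neg i j k
  face_vertex : ∀ i j k, CyclicMem S.faces i j k → ∀ x, S.Misses x x i j k
  face_edge : ∀ i j k, CyclicMem S.faces i j k → ∀ x y, s(x, y) ∈ S.edges → S.Misses x y i j k
  nonface : ∀ i j k, s(i, j) ∈ S.edges → s(j, k) ∈ S.edges → s(i, k) ∈ S.edges →
    CyclicMem S.faces i j k ∨ S.Nonpos j i k ∨ ∃ l, S.Neg i j l ∧ S.Neg j k l ∧ S.Neg k i l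
  hull : ∀ v ∈ S.hull, ∃ u ≠ v, ∀ k, S.Nonpos u v k
  internal : ∀ v ∉ S.hull, ∀ u ≠ v, ∃ k, S.Neg v u k

namespace Placement

lemma neg (hp : S.Placement P p) (h : S.Neg i j k) : orient (p i) (p j) (p k) < 0 := by
  rcases h with h | h | h
  · exact hp.strict_neg _ h
  · rw [← orient_rotate_left]
    exact hp.strict_neg _ h
  · rw [← orient_rotate_right]
    exact hp.strict_neg _ h

lemma nonpos (hp : S.Placement P p) (h : S.Nonpos i j k) : orient (p i) (p j) (p k) ≤ 0 := by
  rcases h with rfl | rfl | rfl | h | h | h | h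
  · exact (orient_self_left _ _).le
  · exact (orient_self_right _ _).le
  · exact (orient_self_outer _ _).le
  · exact (hp.neg h).le
  · exact hp.weak_nonpos _ h
  · rw [← orient_rotate_left]
    exact hp.weak_nonpos _ h
  · rw [← orient_rotate_right]
    exact hp.weak_nonpos _ h

lemma injective (hp : S.Placement P p) (hS : S.IsCertified) : p.Injective := by
  intro i j hij
  by_contra hne
  obtain ⟨k, l, hneg, hnonpos⟩ := hS.distinct i j hne
  have hikl := hp.neg hneg
  have hjlk := hp.nonpos hnonpos
  rw [← hij, orient_swap_right] at hjlk
  linarith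

lemma range_eq (hp : S.Placement P p) (hS : S.IsCertified) : range p = P := by
  have himage : Finset.univ.image p = P :=
    Finset.eq_of_subset_of_card_le (Finset.image_subset_iff.2 fun i _ => hp.mem i)
      (by rw [Finset.card_image_of_injective _ (hp.injective hS), Finset.card_univ,
        Fintype.card_fin, hp.card_eq])
  rw [← himage, Finset.coe_image, Finset.coe_univ, image_univ]

lemma mk_mem_segments_iff (hp : S.Placement P p) (hS : S.IsCertified) :
    s(p i, p j) ∈ S.segments p ↔ s(i, j) ∈ S.edges := by
  rw [TriangulationType.segments, ← Sym2.map_mk,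
    (Sym2.map.injective (hp.injective hS)).mem_set_image, Finset.mem_coe]

lemma exists_of_mem_segments {a b : Pt} (h : s(a, b) ∈ S.segments p) :
    ∃ i j, s(i, j) ∈ S.edges ∧ p i = a ∧ p j = b := by
  obtain ⟨e, he, heq⟩ := h
  induction e with | _ i j
  rcases Sym2.eq_iff.1 heq with ⟨hi, hj⟩ | ⟨hi, hj⟩
  · exact ⟨i, j, he, hi, hj⟩
  · exact ⟨j, i, Sym2.eq_swap ▸ he, hj, hi⟩

lemma not_crosses (hp : S.Placement P p) (h : S.Avoids i j k l) :
    ¬ Crosses (p i) (p j) (p k) (p l) := by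
  rcases h with (⟨rfl, h⟩ | ⟨rfl, h⟩ | ⟨rfl, h⟩ | ⟨rfl, h⟩) | ⟨u, w, hi, hj, hk, hl⟩ |
    ⟨u, w, hi, hj, hij, hk, hl, hkl⟩
  · exact not_crosses_of_common_endpoint (hp.neg h)
  · exact fun hc => not_crosses_of_common_endpoint (hp.neg h) hc.swap_right
  · exact fun hc => not_crosses_of_common_endpoint (hp.neg h) hc.swap_left
  · exact fun hc => not_crosses_of_common_endpoint (hp.neg h) hc.swap_left.swap_right
  · exact not_crosses_of_strict (hp.neg hi) (hp.neg hj) (hp.nonpos hk) (hp.nonpos hl)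
  · exact not_crosses_of_weak (hp.nonpos hi) (hp.nonpos hj) (hij.imp hp.neg hp.neg)
      (hp.nonpos hk) (hp.nonpos hl) (hkl.imp hp.neg hp.neg)

lemma validSegs (hp : S.Placement P p) (hS : S.IsCertified) : ValidSegs P (S.segments p) := by
  refine ⟨?_, fun a b c d hab hcd hne => ?_⟩
  · rintro _ ⟨e, he, rfl⟩
    induction e with | _ i j
    refine ⟨p i, p j, hp.mem i, hp.mem j, fun hij => ?_, Sym2.map_mk _ _ _⟩
    rw [hp.injective hS hij] at he
    exact hS.loopless j he
  · obtain ⟨i, j, hij, rfl, rfl⟩ := exists_of_mem_segments hab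
    obtain ⟨k, l, hkl, rfl, rfl⟩ := exists_of_mem_segments hcd
    rcases hS.noncrossing i j k l hij hkl (fun h => hne (congrArg (Sym2.map p) h)) with h | h
    · exact hp.not_crosses h
    · exact fun hcross => hp.not_crosses h hcross.symm

lemma isTriangulation (hp : S.Placement P p) (hS : S.IsCertified) :
    IsTriangulation P (S.segments p) := by
  refine ⟨hp.validSegs hS, fun T hT hsub => hsub.antisymm' fun e he => ?_⟩
  obtain ⟨a, b, ha, hb, hab, rfl⟩ := hT.1 e he
  rw [← Finset.mem_coe, ← hp.range_eq hS] at ha hb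
  obtain ⟨⟨i, rfl⟩, ⟨j, rfl⟩⟩ := ha, hb
  rcases hS.maximal i j (fun h => hab (congrArg p h)) with hij | ⟨k, l, hkl, h₁, h₂, h₃, h₄⟩
  · exact (hp.mk_mem_segments_iff hS).2 hij
  · have hmem := (hp.mk_mem_segments_iff hS).2 hkl
    by_contra hnot
    exact hT.2 _ _ _ _ (hsub hmem) he (fun h => hnot (h ▸ hmem))
      (crosses_of_orient (hp.neg h₁) (hp.neg h₂) (hp.nonpos h₃) (hp.nonpos h₄))

lemma disjoint_openTriangle (hp : S.Placement P p) (hS : S.IsCertified) {x y : Fin n}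
    (h : S.Misses x y i j k) :
    Disjoint (segment ℝ (p x) (p y)) (openTriangle (p i) (p j) (p k)) := by
  obtain ⟨u, w, huw, hi, hj, hk, hx, hy⟩ := h
  exact disjoint_segment_openTriangle ((hp.injective hS).ne huw) (hp.nonpos hi) (hp.nonpos hj)
    (hp.nonpos hk) (hp.nonpos hx) (hp.nonpos hy)

lemma isTriangleOf_of_face (hp : S.Placement P p) (hS : S.IsCertified)
    (h : CyclicMem S.faces i j k) : IsTriangleOf P (S.segments p) (p i) (p j) (p k) := by
  obtain ⟨hij, hjk, hik, -⟩ := hS.face i j k h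
  have hne : ∀ {x y}, s(x, y) ∈ S.edges → p x ≠ p y := by
    intro x y hxy heq
    rw [hp.injective hS heq] at hxy
    exact hS.loopless y hxy
  refine ⟨hp.mem i, hp.mem j, hp.mem k, hne hij, hne hjk, hne hik,
    (hp.mk_mem_segments_iff hS).2 hij, (hp.mk_mem_segments_iff hS).2 hjk,
    (hp.mk_mem_segments_iff hS).2 hik, fun z hz => ?_, fun u v huv z hz => ?_⟩
  · rw [← Finset.mem_coe, ← hp.range_eq hS] at hz
    obtain ⟨x, rfl⟩ := hz
    exact (hp.disjoint_openTriangle hS (hS.face_vertex i j k h x)).notMem_of_mem_left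
      (left_mem_segment ℝ _ _)
  · obtain ⟨x, y, hxy, rfl, rfl⟩ := exists_of_mem_segments huv
    exact (hp.disjoint_openTriangle hS (hS.face_edge i j k h x y hxy)).notMem_of_mem_left hz

lemma face_of_isTriangleOf (hp : S.Placement P p) (hS : S.IsCertified)
    (h : IsTriangleOf P (S.segments p) (p i) (p j) (p k)) (hcw : Clockwise (p i) (p j) (p k)) :
    CyclicMem S.faces i j k := by
  obtain ⟨-, -, -, -, -, -, hij, hjk, hik, hempty, -⟩ := h
  rw [hp.mk_mem_segments_iff hS] at hij hjk hik
  rcases hS.nonface i j k hij hjk hik with hface | hjik | ⟨l, hl₁, hl₂, hl₃⟩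
  · exact hface
  · have hnonpos := hp.nonpos hjik
    rw [orient_swap_left, neg_nonpos] at hnonpos
    exact absurd hcw hnonpos.not_gt
  · exact absurd (mem_openTriangle (hp.neg hl₁) (hp.neg hl₂) (hp.neg hl₃)) (hempty _ (hp.mem l))

lemma realizes (hp : S.Placement P p) (hS : S.IsCertified) : S.Realizes P p where
  injective := hp.injective hS
  range_eq := hp.range_eq hS
  isTriangulation := hp.isTriangulation hS
  isTriangleOf_iff i j k :=
    ⟨fun h => hp.face_of_isTriangleOf hS h.1 h.2,
      fun h => ⟨hp.isTriangleOf_of_face hS h, hp.neg (hS.face i j k h).2.2.2⟩⟩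

lemma hullPoint_iff_mem_hull (hp : S.Placement P p) (hS : S.IsCertified)
    (hP : ¬ Collinear ℝ (P : Set Pt)) (v : Fin n) : HullPoint P (p v) ↔ v ∈ S.hull := by
  rw [hullPoint_iff hP (hp.mem v)]
  constructor
  · rintro ⟨u, hu, huv, hside⟩
    rw [← Finset.mem_coe, ← hp.range_eq hS] at hu
    obtain ⟨u, rfl⟩ := hu
    by_contra hv
    obtain ⟨k, hk⟩ := hS.internal v hv u (fun h => huv (congrArg p h))
    have hneg := hp.neg hk
    rw [orient_swap_left] at hneg
    linarith [hside _ (hp.mem k)]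
  · intro hv
    obtain ⟨u, huv, hside⟩ := hS.hull v hv
    refine ⟨p u, hp.mem u, (hp.injective hS).ne huv, fun z hz => ?_⟩
    rw [← Finset.mem_coe, ← hp.range_eq hS] at hz
    obtain ⟨k, rfl⟩ := hz
    exact hp.nonpos (hside k)

lemma hullCount_eq (hp : S.Placement P p) (hS : S.IsCertified)
    (hP : ¬ Collinear ℝ (P : Set Pt)) : hullCount P = S.hull.card := by
  have hset : {x | HullPoint P x} = p '' S.hull := by
    ext x
    constructor
    · intro hx
      obtain ⟨v, rfl⟩ := (hp.range_eq hS).ge hx.1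
      exact ⟨v, (hp.hullPoint_iff_mem_hull hS hP v).1 hx, rfl⟩
    · rintro ⟨v, hv, rfl⟩
      exact (hp.hullPoint_iff_mem_hull hS hP v).2 hv
  rw [hullCount, hset, Set.ncard_image_of_injective _ (hp.injective hS), Set.ncard_coe_finset]

end Placement

end SignPattern

/-! ### The combinatorial types -/

namespace SignPattern

/-- A single triangle. -/
def triangle : SignPattern 3 where
  edges := {s(0, 1), s(0, 2), s(1, 2)}
  faces := [(0, 1, 2)]
  hull := {0, 1, 2}
  strict := [(0, 1, 2)]
  weak := []

/-- A convex quadrilateral cut by a diagonal at `0`. The angle at `0` may be straight. -/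
def fan₄ : SignPattern 4 where
  edges := {s(0, 1), s(0, 2), s(0, 3), s(1, 2), s(2, 3)}
  faces := [(0, 1, 2), (0, 2, 3)]
  hull := {0, 1, 2, 3}
  strict := [(0, 1, 2), (0, 2, 3)]
  weak := [(0, 1, 3), (1, 2, 3)]

/-- A triangle joined to an interior point `0`. -/
def wheel₃ : SignPattern 4 where
  edges := {s(0, 1), s(0, 2), s(0, 3), s(1, 2), s(2, 3), s(1, 3)}
  faces := [(0, 1, 2), (0, 2, 3), (0, 3, 1)]
  hull := {1, 2, 3}
  strict := [(0, 1, 2), (0, 2, 3), (0, 3, 1), (1, 2, 3)]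
  weak := []

/-- A convex pentagon cut by two diagonals at `0`. Angles may be straight. -/
def fan₅ : SignPattern 5 where
  edges := {s(0, 1), s(0, 2), s(0, 3), s(0, 4), s(1, 2), s(2, 3), s(3, 4)}
  faces := [(0, 1, 2), (0, 2, 3), (0, 3, 4)]
  hull := {0, 1, 2, 3, 4}
  strict := [(0, 1, 2), (0, 2, 3), (0, 3, 4), (0, 1, 3), (0, 2, 4)]
  weak := [(0, 1, 4), (1, 2, 3), (1, 2, 4), (1, 3, 4), (2, 3, 4)]

/-- A convex quadrilateral joined to an interior point `0`, which lies weakly to a fixed side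
of each diagonal. -/
def wheel₄ : SignPattern 5 where
  edges := {s(0, 1), s(0, 2), s(0, 3), s(0, 4), s(1, 2), s(2, 3), s(3, 4), s(1, 4)}
  faces := [(0, 1, 2), (0, 2, 3), (0, 3, 4), (0, 4, 1)]
  hull := {1, 2, 3, 4}
  strict := [(0, 1, 2), (0, 2, 3), (0, 3, 4), (0, 4, 1)]
  weak := [(1, 2, 3), (2, 3, 4), (3, 4, 1), (4, 1, 2), (1, 3, 0), (2, 4, 0)]

/-- The triangle `012` joined to an interior point `3`, with the face `013` joined to a further
point `4`. The list `weak` is left as a parameter to fix the side of `4` on the line `23`. -/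
def stacked (weak : List (Fin 5 × Fin 5 × Fin 5)) : SignPattern 5 where
  edges := {s(0, 1), s(0, 2), s(0, 3), s(0, 4), s(1, 2), s(1, 3), s(1, 4), s(2, 3), s(3, 4)}
  faces := [(1, 2, 3), (2, 0, 3), (0, 1, 4), (1, 3, 4), (3, 0, 4)]
  hull := {0, 1, 2}
  strict := [(0, 1, 3), (1, 2, 3), (2, 0, 3), (0, 1, 2), (0, 1, 4), (1, 3, 4), (3, 0, 4),
    (2, 0, 4), (1, 2, 4)]
  weak := weak

lemma triangle_isCertified : triangle.IsCertified := by
  constructor <;> decide +kernel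

lemma fan₄_isCertified : fan₄.IsCertified := by
  constructor <;> decide +kernel

lemma wheel₃_isCertified : wheel₃.IsCertified := by
  constructor <;> decide +kernel

lemma fan₅_isCertified : fan₅.IsCertified := by
  constructor <;> decide +kernel

lemma wheel₄_isCertified : wheel₄.IsCertified := by
  constructor <;> decide +kernel

lemma stacked_isCertified_of_left : (stacked [(4, 2, 3)]).IsCertified := by
  constructor <;> decide +kernel

lemma stacked_isCertified_of_right : (stacked [(2, 4, 3)]).IsCertified := by
  constructor <;> decide +kernel

/-- The sign patterns realized by the point sets of size `n`, for `n ≤ 5`. -/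
def ofCard : (n : ℕ) → List (SignPattern n)
  | 3 => [triangle]
  | 4 => [fan₄, wheel₃]
  | 5 => [fan₅, wheel₄, stacked [(4, 2, 3)], stacked [(2, 4, 3)]]
  | _ => []

lemma isCertified_of_mem_ofCard : ∀ {n : ℕ} {S : SignPattern n}, S ∈ ofCard n → S.IsCertified
  | 3, S, hS => by
    obtain rfl : S = triangle := by simpa only [ofCard, List.mem_singleton] using hS
    exact triangle_isCertified
  | 4, S, hS => by
    have hS : S = fan₄ ∨ S = wheel₃ := by simpa [ofCard] using hS
    rcases hS with rfl | rfl
    exacts [fan₄_isCertified, wheel₃_isCertified]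
  | 5, S, hS => by
    have hS : S = fan₅ ∨ S = wheel₄ ∨ S = stacked [(4, 2, 3)] ∨ S = stacked [(2, 4, 3)] := by
      simpa [ofCard] using hS
    rcases hS with rfl | rfl | rfl | rfl
    exacts [fan₅_isCertified, wheel₄_isCertified, stacked_isCertified_of_left,
      stacked_isCertified_of_right]

lemma toTriangulationType_eq_of_card_hull_eq {n : ℕ} {S S' : SignPattern n} (hS : S ∈ ofCard n)
    (hS' : S' ∈ ofCard n) (h : S.hull.card = S'.hull.card) :
    S.toTriangulationType = S'.toTriangulationType := by
  unfold ofCard at hS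
  split at hS
  · simp_all [ofCard]
  · simp only [ofCard, List.mem_cons, List.not_mem_nil, or_false] at hS hS'
    rcases hS with rfl | rfl <;> rcases hS' with rfl | rfl <;> first | rfl | contradiction
  · simp only [ofCard, List.mem_cons, List.not_mem_nil, or_false] at hS hS'
    rcases hS with rfl | rfl | rfl | rfl <;> rcases hS' with rfl | rfl | rfl | rfl <;>
      first | rfl | contradiction
  · contradiction

end SignPattern

/-! ### Triangles of maximal area -/

/-- The point `d` lies in the open clockwise triangle `abc`. -/
structure Inside (a b c d : Pt) : Prop where
  ab : orient a b d < 0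
  bc : orient b c d < 0
  ca : orient c a d < 0

/-- The point `d` lies weakly beyond the edge `ab` of the clockwise triangle `abc`, but strictly
on the inner side of the other two edges. -/
structure Beyond (a b c d : Pt) : Prop where
  ab : orient b a d ≤ 0
  bc : orient b c d < 0
  ca : orient c a d < 0

/-- The triangle `abc` is clockwise and has maximal area among the triangles spanned by `P`. -/
structure IsMaxTriangle {P : Finset Pt} (a b c : P) : Prop where
  neg : orient a b c < 0
  le : ∀ x y z : P, orient a b c ≤ orient x y z

section MaxTriangle

variable {P : Finset Pt} {a b c d : P}

lemma exists_isMaxTriangle (hP : ¬ Collinear ℝ (P : Set Pt)) :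
    ∃ a b c : P, IsMaxTriangle a b c := by
  obtain ⟨x, hx, y, hy, z, hz, hxyz⟩ := exists_orient_neg hP
  have : Nonempty P := ⟨⟨x, hx⟩⟩
  obtain ⟨⟨a, b, c⟩, hmin⟩ := Finite.exists_min fun t : P × P × P => orient t.1 t.2.1 t.2.2
  exact ⟨a, b, c, (hmin (⟨x, hx⟩, ⟨y, hy⟩, ⟨z, hz⟩)).trans_lt hxyz, fun x y z => hmin (x, y, z)⟩

lemma IsMaxTriangle.rotate (h : IsMaxTriangle a b c) : IsMaxTriangle b c a :=
  ⟨orient_rotate_left a.1 b c ▸ h.neg, orient_rotate_left a.1 b c ▸ h.le⟩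

lemma Inside.rotate {a b c d : Pt} (h : Inside a b c d) : Inside b c a d :=
  ⟨h.bc, h.ca, h.ab⟩

lemma Inside.neg {a b c d : Pt} (h : Inside a b c d) : orient a b c < 0 := by
  linarith [h.ab, h.bc, h.ca, orient_add_orient_add_orient a b c d]

lemma IsMaxTriangle.neg_of_orient_nonneg (h : IsMaxTriangle a b c) (hd : d ≠ b)
    (habd : 0 ≤ orient a b d) : orient b c d < 0 := by
  by_contra! hbcd
  have hsum := orient_add_orient_add_orient a.1 b c d
  have hmax := h.le c a d
  exact hd (Subtype.ext (eq_of_orient_eq_zero h.neg.ne (by linarith) (by linarith)))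

lemma IsMaxTriangle.inside_or_beyond (h : IsMaxTriangle a b c) (ha : d ≠ a) (hb : d ≠ b)
    (hc : d ≠ c) :
    Inside a b c d ∨ Beyond a b c d ∨ Beyond b c a d ∨ Beyond c a b d := by
  have hab := h.neg_of_orient_nonneg hb
  have hbc := h.rotate.neg_of_orient_nonneg hc
  have hca := h.rotate.rotate.neg_of_orient_nonneg ha
  rcases lt_or_ge (orient a b d) 0 with h₁ | h₁
  · rcases lt_or_ge (orient b c d) 0 with h₂ | h₂
    · rcases lt_or_ge (orient c a d) 0 with h₃ | h₃
      · exact .inl ⟨h₁, h₂, h₃⟩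
      · exact .inr (.inr (.inr ⟨by rwa [orient_swap_left, neg_nonpos], h₁, h₂⟩))
    · exact .inr (.inr (.inl ⟨by rwa [orient_swap_left, neg_nonpos], hbc h₂, h₁⟩))
  · refine .inr (.inl ⟨by rwa [orient_swap_left, neg_nonpos], hab h₁, ?_⟩)
    by_contra! h₃
    exact (hca h₃).not_ge h₁

end MaxTriangle

/-! ### Classification of small point sets -/

/-- One of the sign patterns in `SignPattern.ofCard n` can be placed at the points of `P`. -/
def HasPlacement (n : ℕ) (P : Finset Pt) : Prop :=
  ∃ S ∈ SignPattern.ofCard n, ∃ p, S.Placement P p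

section Classification

open SignPattern

variable {P : Finset Pt} {a b c d e o : P}

lemma hasPlacement_of_mem {n : ℕ} {S : SignPattern n} (hS : S ∈ ofCard n) (hP : P.card = n)
    (p : Fin n → P) (hstrict : ∀ t ∈ S.strict, orient (p t.1) (p t.2.1) (p t.2.2) < 0)
    (hweak : ∀ t ∈ S.weak, orient (p t.1) (p t.2.1) (p t.2.2) ≤ 0) : HasPlacement n P :=
  ⟨S, hS, fun i => p i, hP, fun i => (p i).2, hstrict, hweak⟩

lemma hasPlacement_three (hP : P.card = 3) (habc : orient a b c < 0) : HasPlacement 3 P :=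
  hasPlacement_of_mem (S := triangle) (by simp [ofCard]) hP ![a, b, c] (by simpa [triangle])
    (by simp [triangle])

lemma hasPlacement_four_of_inside (hP : P.card = 4) (hd : Inside a b c d) : HasPlacement 4 P :=
  hasPlacement_of_mem (S := wheel₃) (by simp [ofCard]) hP ![d, a, b, c]
    (by simpa [wheel₃] using ⟨(orient_rotate_right ..).trans_lt hd.ab,
      (orient_rotate_right ..).trans_lt hd.bc, (orient_rotate_right ..).trans_lt hd.ca, hd.neg⟩)
    (by simp [wheel₃])

lemma exists_notMem_of_card_lt {s : Finset P} (hs : s.card < P.card) : ∃ x, x ∉ s := by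
  obtain ⟨x, -, hx⟩ := Finset.exists_mem_notMem_of_card_lt_card
    (t := Finset.univ) (hs.trans_eq (Fintype.card_coe P).symm)
  exact ⟨x, hx⟩

lemma hasPlacement_four_of_beyond (hP : P.card = 4) (habc : orient a b c < 0)
    (hd : Beyond a b c d) : HasPlacement 4 P :=
  hasPlacement_of_mem (S := fan₄) (by simp [ofCard]) hP ![c, a, d, b]
    (by simpa [fan₄] using ⟨hd.ca, (orient_rotate_left ..).trans_lt hd.bc⟩)
    (by simpa [fan₄] using ⟨(orient_rotate_right ..).trans_le habc.le,
      (orient_rotate_left ..).trans_le hd.ab⟩)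

lemma IsMaxTriangle.hasPlacement_four (h : IsMaxTriangle a b c) (hP : P.card = 4) :
    HasPlacement 4 P := by
  obtain ⟨d, hd⟩ := exists_notMem_of_card_lt (s := {a, b, c})
    (Finset.card_le_three.trans_lt (by omega))
  simp only [Finset.mem_insert, Finset.mem_singleton, not_or] at hd
  rcases h.inside_or_beyond hd.1 hd.2.1 hd.2.2 with hd | hd | hd | hd
  · exact hasPlacement_four_of_inside hP hd
  · exact hasPlacement_four_of_beyond hP h.neg hd
  · exact hasPlacement_four_of_beyond hP h.rotate.neg hd
  · exact hasPlacement_four_of_beyond hP h.rotate.rotate.neg hd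

lemma neg_of_mul_eq_add {R : Type*} [Ring R] [LinearOrder R] [IsStrictOrderedRing R]
    {p q r s t u : R} (h : p * q = r * s + t * u) (hp : p < 0) (hr : r ≤ 0) (hs : s ≤ 0)
    (ht : t < 0) (hu : u < 0) : q < 0 := by
  have hpos : 0 < p * q :=
    h ▸ add_pos_of_nonneg_of_pos (mul_nonneg_of_nonpos_of_nonpos hr hs)
      (mul_pos_of_neg_of_neg ht hu)
  exact neg_of_mul_pos_right hpos hp.le

/-- The points `a`, `b`, `c`, `d` form a weakly convex clockwise quadrilateral, and consecutive
ones are seen in strictly clockwise order from `o`. -/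
structure IsWheel (o a b c d : Pt) : Prop where
  oab : orient o a b < 0
  obc : orient o b c < 0
  ocd : orient o c d < 0
  oda : orient o d a < 0
  abc : orient a b c ≤ 0
  bcd : orient b c d ≤ 0
  cda : orient c d a ≤ 0
  dab : orient d a b ≤ 0

lemma IsWheel.rotate {o a b c d : Pt} (h : IsWheel o a b c d) : IsWheel o b c d a :=
  ⟨h.obc, h.ocd, h.oda, h.oab, h.bcd, h.cda, h.dab, h.abc⟩

lemma IsWheel.hasPlacement_of_diagonals (hP : P.card = 5) (h : IsWheel (o : Pt) a b c d)
    (haco : orient a c o ≤ 0) (hbdo : orient b d o ≤ 0) : HasPlacement 5 P :=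
  hasPlacement_of_mem (S := wheel₄) (by simp [ofCard]) hP ![o, a, b, c, d]
    (by simpa [wheel₄] using ⟨h.oab, h.obc, h.ocd, h.oda⟩)
    (by simpa [wheel₄] using ⟨h.abc, h.bcd, h.cda, h.dab, haco, hbdo⟩)

lemma IsWheel.hasPlacement (hP : P.card = 5) (h : IsWheel (o : Pt) a b c d) :
    HasPlacement 5 P := by
  have hac := orient_swap_left a.1 c o
  have hbd := orient_swap_left b.1 d o
  rcases le_total (orient a c o) 0 with haco | haco <;>
  rcases le_total (orient b d o) 0 with hbdo | hbdo
  · exact h.hasPlacement_of_diagonals hP haco hbdo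
  · exact h.rotate.rotate.rotate.hasPlacement_of_diagonals hP (by linarith) haco
  · exact h.rotate.hasPlacement_of_diagonals hP hbdo (by linarith)
  · exact h.rotate.rotate.hasPlacement_of_diagonals hP (by linarith) (by linarith)

lemma Beyond.hasPlacement_five (hP : P.card = 5) (he : Beyond (a : Pt) b c e)
    (habc : orient a b c < 0) (hbcd : orient b c d < 0) (hcad : orient c a d < 0)
    (hdae : orient d a e < 0) (hdeb : orient d e b < 0) : HasPlacement 5 P :=
  IsWheel.hasPlacement (o := d) (a := a) (b := e) (c := b) (d := c) hP
    { oab := hdae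
      obc := hdeb
      ocd := (orient_rotate_right ..).trans_lt hbcd
      oda := (orient_rotate_right ..).trans_lt hcad
      abc := (orient_rotate_left ..).trans_le he.ab
      bcd := (orient_rotate_right ..).trans_le he.bc.le
      cda := (orient_rotate_left ..).trans_le habc.le
      dab := he.ca.le }

lemma hasPlacement_five_of_inside_beyond (hP : P.card = 5) (hd : Inside (a : Pt) b c d)
    (he : Beyond (a : Pt) b c e) : HasPlacement 5 P := by
  have hdae : orient d a e < 0 :=
    neg_of_mul_eq_add (by simp only [orient_eq]; ring : orient a b c * orient d a e =
      orient b a e * orient c a d + orient c a e * orient a b d)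
      hd.neg he.ab hd.ca.le he.ca hd.ab
  have hdeb : orient d e b < 0 :=
    neg_of_mul_eq_add (by simp only [orient_eq]; ring : orient a b c * orient d e b =
      orient b a e * orient b c d + orient b c e * orient a b d)
      hd.neg he.ab hd.bc.le he.bc hd.ab
  exact he.hasPlacement_five hP hd.neg hd.bc hd.ca hdae hdeb

lemma orient_neg_of_beyond_beyond {a b c d e : Pt} (hne : d ≠ e) (hd : Beyond a b c d)
    (hcde : orient c d e ≤ 0) (hdae : 0 ≤ orient d a e) (hdeb : orient d e b ≤ 0) :
    orient c d e < 0 := by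
  refine hcde.lt_of_ne fun hzero => hne ?_
  have hplücker : orient c a d * orient d e b =
      orient c d e * orient b a d + orient b c d * orient d a e := by
    simp only [orient_eq]; ring
  rw [hzero, zero_mul, zero_add] at hplücker
  have hle : orient b c d * orient d a e ≤ 0 := mul_nonpos_of_nonpos_of_nonneg hd.bc.le hdae
  have hge : 0 ≤ orient c a d * orient d e b := mul_nonneg_of_nonpos_of_nonpos hd.ca.le hdeb
  have hdae_zero : orient d a e = 0 :=
    (mul_eq_zero.1 (hle.antisymm (hplücker ▸ hge))).resolve_left hd.bc.ne
  have hcda : orient c d a ≠ 0 := by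
    rw [orient_swap_right]
    exact neg_ne_zero.2 hd.ca.ne
  exact (eq_of_orient_eq_zero hcda hzero hdae_zero).symm

lemma hasPlacement_five_of_beyond_beyond (hP : P.card = 5) (habc : orient a b c < 0)
    (hne : d ≠ e) (hd : Beyond (a : Pt) b c d) (he : Beyond (a : Pt) b c e) :
    HasPlacement 5 P := by
  wlog hcde : orient c d e ≤ 0 generalizing d e with hswap
  · exact hswap hne.symm he hd (by rw [orient_swap_right]; linarith)
  rcases lt_or_ge (orient d a e) 0 with hdae | hdae
  · have hdeb : orient d e b < 0 :=
      neg_of_mul_eq_add (by simp only [orient_eq]; ring : orient c a d * orient d e b =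
        orient c d e * orient b a d + orient b c d * orient d a e)
        hd.ca hcde hd.ab hd.bc hdae
    exact he.hasPlacement_five hP habc hd.bc hd.ca hdae hdeb
  rcases lt_or_ge (orient e d b) 0 with hedb | hedb
  · have head : orient e a d < 0 :=
      neg_of_mul_eq_add (by simp only [orient_eq]; ring : orient b c e * orient e a d =
        orient b a e * orient c d e + orient c a e * orient e d b)
        he.bc he.ab hcde he.ca hedb
    exact hd.hasPlacement_five hP habc he.bc he.ca head hedb
  have hade : orient a d e ≤ 0 := by rwa [orient_swap_left, neg_nonpos]
  have hdeb : orient d e b ≤ 0 := by rwa [orient_swap_left, neg_nonpos]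
  have hcde := orient_neg_of_beyond_beyond (Subtype.coe_ne_coe.2 hne) hd hcde hdae hdeb
  have hceb := (orient_rotate_left b.1 c e).trans_lt he.bc
  have hcdb := (orient_rotate_left b.1 c d).trans_lt hd.bc
  have hcab := (orient_rotate_right a.1 b c).trans_lt habc
  have hadb := (orient_rotate_left b.1 a d).trans_le hd.ab
  have haeb := (orient_rotate_left b.1 a e).trans_le he.ab
  exact hasPlacement_of_mem (S := fan₅) (by simp [ofCard]) hP ![c, a, d, e, b]
    (by simpa [fan₅] using ⟨hd.ca, hcde, hceb, he.ca, hcdb⟩)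
    (by simpa [fan₅] using ⟨hcab.le, hade, hadb, haeb, hdeb⟩)

lemma orient_nonpos_of_beyond_adjacent {a b c d e : Pt} (habc : orient a b c < 0)
    (hd : Beyond a b c d) (he : Beyond b c a e) (hcad : orient a b c ≤ orient c a d)
    (hcae : orient a b c ≤ orient c a e) : orient d b e ≤ 0 := by
  have habd : -orient b a d ≤ -orient b c d := by
    linarith [orient_add_orient_add_orient a b c d, orient_swap_left a b d]
  have hbce : -orient c b e ≤ -orient a b e := by
    linarith [orient_add_orient_add_orient a b c e, orient_swap_left b c e]
  have hplücker : orient a b c * orient d b e =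
      orient b c d * orient a b e - orient c b e * orient b a d := by
    simp only [orient_eq]; ring
  have hmul := mul_le_mul hbce habd (neg_nonneg.2 hd.ab) (neg_nonneg.2 he.ca.le)
  have hnonneg : 0 ≤ orient a b c * orient d b e := by linarith
  exact nonpos_of_mul_nonneg_right hnonneg habc

lemma orient_neg_of_beyond_adjacent {a b c d e : Pt} (hd : Beyond a b c d) (he : Beyond b c a e)
    (hdbe : orient d b e = 0) : orient c b e < 0 := by
  refine he.ab.lt_of_ne fun hzero => ?_
  have hplücker : orient a b c * orient d b e =
      orient b c d * orient a b e - orient c b e * orient b a d := by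
    simp only [orient_eq]; ring
  rw [hdbe, hzero, mul_zero, zero_mul, sub_zero] at hplücker
  exact (mul_pos_of_neg_of_neg hd.bc he.ca).ne hplücker

lemma IsMaxTriangle.hasPlacement_five_of_beyond_adjacent (h : IsMaxTriangle a b c)
    (hP : P.card = 5) (hd : Beyond (a : Pt) b c d) (he : Beyond (b : Pt) c a e) :
    HasPlacement 5 P := by
  have hade : orient a d e < 0 :=
    neg_of_mul_eq_add (by simp only [orient_eq]; ring : orient a b c * orient a d e =
      orient b a d * orient c a e + orient a b e * orient c a d)
      h.neg hd.ab he.bc.le he.ca hd.ca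
  have hcde : orient c d e < 0 :=
    neg_of_mul_eq_add (by simp only [orient_eq]; ring : orient a b c * orient c d e =
      orient c b e * orient c a d + orient c a e * orient b c d)
      h.neg he.ab hd.ca.le he.bc hd.bc
  have hbca := h.rotate.neg
  have hcab := h.rotate.rotate.neg
  have hadb := (orient_rotate_left b.1 a d).trans_le hd.ab
  rcases (orient_nonpos_of_beyond_adjacent h.neg hd he (h.le c a d) (h.le c a e)).lt_or_eq
    with hdbe | hdbe
  · have hdec := (orient_rotate_left c.1 d e).trans_lt hcde
    have hdca := (orient_rotate_right c.1 a d).trans_lt hd.ca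
    have hdbc := (orient_rotate_right b.1 c d).trans_lt hd.bc
    have hdea := (orient_rotate_left a.1 d e).trans_lt hade
    have hdba := (orient_rotate_right b.1 a d).trans_le hd.ab
    have hbec := (orient_rotate_left c.1 b e).trans_le he.ab
    have hbea := (orient_rotate_left a.1 b e).trans_lt he.ca
    have heca := (orient_rotate_right c.1 a e).trans_lt he.bc
    exact hasPlacement_of_mem (S := fan₅) (by simp [ofCard]) hP ![d, b, e, c, a]
      (by simpa [fan₅] using ⟨hdbe, hdec, hdca, hdbc, hdea⟩)
      (by simpa [fan₅] using ⟨hdba, hbec, hbea.le, hbca.le, heca.le⟩)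
  · have hcbe := orient_neg_of_beyond_adjacent hd he hdbe
    have hcdb := (orient_rotate_left b.1 c d).trans_lt hd.bc
    exact hasPlacement_of_mem (S := fan₅) (by simp [ofCard]) hP ![c, a, d, b, e]
      (by simpa [fan₅] using ⟨hd.ca, hcdb, hcbe, hcab, hcde⟩)
      (by simpa [fan₅] using ⟨he.bc.le, hadb, hade.le, he.ca.le, hdbe.le⟩)

lemma hasPlacement_five_of_inside_nested (hP : P.card = 5) (hd : Inside (a : Pt) b c d)
    (he : Inside (a : Pt) b c e) (hde : Inside (a : Pt) b d e) : HasPlacement 5 P := by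
  have hstrict : ∀ weak, ∀ t ∈ (stacked weak).strict,
      orient (![a, b, c, d, e] t.1 : P) (![a, b, c, d, e] t.2.1 : P)
        (![a, b, c, d, e] t.2.2 : P) < 0 := fun _ => by
    simpa [stacked] using ⟨hd.ab, hd.bc, hd.ca, hd.neg, he.ab, hde.bc, hde.ca, he.ca, he.bc⟩
  rcases le_total (orient e c d) 0 with hecd | hecd
  · exact hasPlacement_of_mem (S := stacked [(4, 2, 3)]) (by simp [ofCard]) hP ![a, b, c, d, e]
      (hstrict _) (by simpa [stacked])
  · have hced : orient c e d ≤ 0 := by rwa [orient_swap_left, neg_nonpos]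
    exact hasPlacement_of_mem (S := stacked [(2, 4, 3)]) (by simp [ofCard]) hP ![a, b, c, d, e]
      (hstrict _) (by simpa [stacked])

lemma hasPlacement_five_of_separated (hP : P.card = 5) (hd : Inside (a : Pt) b c d)
    (he : Inside (a : Pt) b c e) (h : orient d a e * orient d b e < 0) : HasPlacement 5 P := by
  rcases mul_neg_iff.1 h with ⟨hdae, hdbe⟩ | ⟨hdae, hdbe⟩
  · refine hasPlacement_five_of_inside_nested hP he hd
      ⟨hd.ab, (orient_rotate_left ..).trans_lt hdbe, ?_⟩
    rwa [← orient_rotate_left, orient_swap_left, neg_lt_zero]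
  · exact hasPlacement_five_of_inside_nested hP hd he
      ⟨he.ab, by rwa [orient_swap_left, neg_lt_zero], hdae⟩

lemma eq_zero_of_weighted_sum_eq_zero {R : Type*} [CommRing R] [LinearOrder R]
    [IsStrictOrderedRing R] {p q r x y z : R} (h : p * x + q * y + r * z = 0) (hp : p < 0)
    (hq : q ≤ 0) (hr : r ≤ 0) (hxy : 0 ≤ x * y) (hxz : 0 ≤ x * z) : x = 0 := by
  have hsq : p * (x * x) = -q * (x * y) + -r * (x * z) := by linear_combination x * h
  have hnonneg : 0 ≤ p * (x * x) := hsq ▸ add_nonneg (mul_nonneg (neg_nonneg.2 hq) hxy)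
    (mul_nonneg (neg_nonneg.2 hr) hxz)
  exact mul_self_eq_zero.1 ((nonpos_of_mul_nonneg_right hnonneg hp).antisymm (mul_self_nonneg x))

lemma Inside.exists_separated {a b c d e : Pt} (hd : Inside a b c d) (hne : d ≠ e) :
    orient d a e * orient d b e < 0 ∨ orient d b e * orient d c e < 0 ∨
      orient d c e * orient d a e < 0 := by
  by_contra! ⟨hab, hbc, hca⟩
  -- The barycentric weights of `d` annihilate the affine functional `x ↦ orient d x e`, which
  -- vanishes at `d`.
  have hsum : orient b c d * orient d a e + orient c a d * orient d b e +
      orient a b d * orient d c e = 0 := by simp only [orient_eq]; ring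
  have hdae : orient d a e = 0 := eq_zero_of_weighted_sum_eq_zero hsum hd.bc hd.ca.le hd.ab.le hab
    (mul_comm (orient d a e) _ ▸ hca)
  have hdbe : orient d b e = 0 := eq_zero_of_weighted_sum_eq_zero
    (by linarith : orient c a d * orient d b e + orient a b d * orient d c e +
      orient b c d * orient d a e = 0) hd.ca hd.ab.le hd.bc.le hbc (mul_comm (orient d b e) _ ▸ hab)
  have hadb : orient a d b ≠ 0 := by
    rw [orient_swap_right]
    exact neg_ne_zero.2 hd.ab.ne
  have hade : orient a d e = 0 := by rw [orient_swap_left, hdae, neg_zero]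
  exact hne (eq_of_orient_eq_zero hadb hade hdbe).symm

lemma hasPlacement_five_of_inside_inside (hP : P.card = 5) (hne : d ≠ e)
    (hd : Inside (a : Pt) b c d) (he : Inside (a : Pt) b c e) : HasPlacement 5 P := by
  rcases hd.exists_separated (Subtype.coe_ne_coe.2 hne) with h | h | h
  · exact hasPlacement_five_of_separated hP hd he h
  · exact hasPlacement_five_of_separated hP hd.rotate he.rotate h
  · exact hasPlacement_five_of_separated hP hd.rotate.rotate he.rotate.rotate h

lemma IsMaxTriangle.hasPlacement_five_of_beyond (h : IsMaxTriangle a b c) (hP : P.card = 5)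
    (hd : Beyond (a : Pt) b c d) : HasPlacement 5 P := by
  obtain ⟨e, he⟩ := exists_notMem_of_card_lt (s := {a, b, c, d})
    (Finset.card_le_four.trans_lt (by omega))
  simp only [Finset.mem_insert, Finset.mem_singleton, not_or] at he
  obtain ⟨hea, heb, hec, hed⟩ := he
  rcases h.inside_or_beyond hea heb hec with he | he | he | he
  · exact hasPlacement_five_of_inside_beyond hP he hd
  · exact hasPlacement_five_of_beyond_beyond hP h.neg hed he hd
  · exact h.hasPlacement_five_of_beyond_adjacent hP hd he
  · exact h.rotate.rotate.hasPlacement_five_of_beyond_adjacent hP he hd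

lemma IsMaxTriangle.inside_or_hasPlacement_five (h : IsMaxTriangle a b c) (hP : P.card = 5)
    (ha : d ≠ a) (hb : d ≠ b) (hc : d ≠ c) : Inside a b c d ∨ HasPlacement 5 P :=
  (h.inside_or_beyond ha hb hc).imp_right fun hd => hd.elim (h.hasPlacement_five_of_beyond hP)
    fun hd => hd.elim (h.rotate.hasPlacement_five_of_beyond hP)
      (h.rotate.rotate.hasPlacement_five_of_beyond hP)

lemma IsMaxTriangle.hasPlacement_five (h : IsMaxTriangle a b c) (hP : P.card = 5) :
    HasPlacement 5 P := by
  obtain ⟨d, hd⟩ := exists_notMem_of_card_lt (s := {a, b, c})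
    (Finset.card_le_three.trans_lt (by omega))
  obtain ⟨e, he⟩ := exists_notMem_of_card_lt (s := {a, b, c, d})
    (Finset.card_le_four.trans_lt (by omega))
  simp only [Finset.mem_insert, Finset.mem_singleton, not_or] at hd he
  rcases h.inside_or_hasPlacement_five hP hd.1 hd.2.1 hd.2.2 with hd | hplacement
  · rcases h.inside_or_hasPlacement_five hP he.1 he.2.1 he.2.2.1 with he' | hplacement
    · exact hasPlacement_five_of_inside_inside hP (Ne.symm he.2.2.2) hd he'
    · exact hplacement
  · exact hplacement

lemma two_lt_card_of_orient_neg (habc : orient a b c < 0) : 2 < P.card := by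
  refine Finset.two_lt_card.2 ⟨a, a.2, b, b.2, c, c.2, ?_, ?_, ?_⟩ <;> intro heq <;>
    simp [heq, orient_self_left, orient_self_right, orient_self_outer] at habc

lemma hasPlacement_of_card_le_five {n : ℕ} (hP : ¬ Collinear ℝ (P : Set Pt)) (hn : P.card = n)
    (hle : n ≤ 5) : HasPlacement n P := by
  obtain ⟨a, b, c, h⟩ := exists_isMaxTriangle hP
  have hlt : 2 < n := (two_lt_card_of_orient_neg h.neg).trans_eq hn
  interval_cases n
  · exact hasPlacement_three hn h.neg
  · exact h.hasPlacement_four hn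
  · exact h.hasPlacement_five hn

end Classification

/-- Two point sets of the same size `n ≤ 5` with the same number of convex
hull points (collinearities allowed) have compatible triangulations. -/
theorem stmt4 (n : ℕ) (hn : n ≤ 5)
    (P Q : Finset Pt) (hPn : P.card = n) (hQn : Q.card = n)
    (hP : ¬ Collinear ℝ (P : Set Pt)) (hQ : ¬ Collinear ℝ (Q : Set Pt))
    (hcount : hullCount P = hullCount Q) :
    ∃ TP TQ : Set (Sym2 Pt), IsTriangulation P TP ∧ IsTriangulation Q TQ ∧
      Compatible P Q TP TQ := by
  obtain ⟨S, hS, p, hp⟩ := hasPlacement_of_card_le_five hP hPn hn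
  obtain ⟨S', hS', q, hq⟩ := hasPlacement_of_card_le_five hQ hQn hn
  have hSc := SignPattern.isCertified_of_mem_ofCard hS
  have hSc' := SignPattern.isCertified_of_mem_ofCard hS'
  have hhull : S.hull.card = S'.hull.card := by
    rw [← hp.hullCount_eq hSc hP, hcount, hq.hullCount_eq hSc' hQ]
  have htype := SignPattern.toTriangulationType_eq_of_card_hull_eq hS hS' hhull
  have hPreal : S.Realizes P p := hp.realizes hSc
  have hQreal : S.Realizes Q q := htype ▸ hq.realizes hSc'
  exact ⟨_, _, hPreal.isTriangulation, hQreal.isTriangulation, hPreal.compatible hQreal⟩
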